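/- For every γ > 0 there exists a constant C > 0, independent of the configuration, such that: for every axisymmetric configuration −1 < z₁ < ⋯ < z_n < 1 of mass m = 0 that is a critical point of E_γ, and every k ∈ {1, …, n−1}, one has z_{k+1} − z_k ≥ C·max{|z_k|, |z_{k+1}|}/γ. -/

import Mathlib

/-!
Write `a = z k < b = z (k + 1)` and `f(x) = x / √(1 - x²)`. The curvature terms of consecutive
interfaces carry opposite signs, so subtracting the two Euler–Lagrange equations gives
`|f a + f b| = 4γ |v b - v a|`.

At zero mass `ξ` vanishes at both poles and is 1-Lipschitz, hence `|ξ(s)| ≤ 1 - |s|` and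
`|v'(s)| = |ξ(s)| / (1 - s²) ≤ 1` (`abs_xi_div_le_one`); therefore `|v b - v a| ≤ b - a`
(`abs_pot_sub_le`). If `a` and `b` have the same sign, then
`max |a| |b| ≤ |f a + f b| ≤ 4γ (b - a)`. If `a ≤ 0 ≤ b`, the curvatures may cancel, but then
`b - a = |a| + |b|`. Both cases are covered by `C = min γ (1/4)`.
-/

/-- The axisymmetric step pattern with `n` interfaces located at `z 1 < ⋯ < z n`
(with `z 0 = -1`, `z (n+1) = 1`): `u(t) = (-1)^(k+1)` for `t ∈ [z k, z (k+1))`,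
so `u = -1` on `[-1, z 1)`. -/
noncomputable def pattern (n : ℕ) (z : ℕ → ℝ) (t : ℝ) : ℝ :=
  (-1 : ℝ) ^ (((Finset.Icc 1 n).filter (fun i => z i ≤ t)).card + 1)

/-- The mass `m = (1/2)∫_{-1}^1 u(t) dt`. -/
noncomputable def mass (n : ℕ) (z : ℕ → ℝ) : ℝ :=
  (1 / 2) * ∫ t in (-1 : ℝ)..1, pattern n z t

/-- `ξ(t) = ∫_{-1}^t (u(s) - m) ds`. -/
noncomputable def xi (n : ℕ) (z : ℕ → ℝ) (t : ℝ) : ℝ :=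
  ∫ s in (-1 : ℝ)..t, (pattern n z s - mass n z)

/-- The potential `v(t) = ∫_0^t ξ(s)/(1-s²) ds`. -/
noncomputable def pot (n : ℕ) (z : ℕ → ℝ) (t : ℝ) : ℝ :=
  ∫ s in (0 : ℝ)..t, xi n z s / (1 - s ^ 2)

/-- `z` is an axisymmetric configuration with `n` interfaces:
`-1 = z 0 < z 1 < ⋯ < z n < z (n+1) = 1`. -/
def IsConfig (n : ℕ) (z : ℕ → ℝ) : Prop :=
  z 0 = -1 ∧ z (n + 1) = 1 ∧ ∀ i j, i < j → j ≤ n + 1 → z i < z j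

/-- The configuration is a critical point of `E_γ`: the Euler–Lagrange equation
`κ_g(z_k) + 4γ v(z_k) = λ` holds at every interface `z 1, …, z n`, with a single
constant `λ`; here `κ_g(z_k) = (-1)^(k+1) z_k / √(1 - z_k²)` is the signed geodesic
curvature of the interface circle with respect to the outer normal of `{u = 1}`. -/
def IsCritical (γ : ℝ) (n : ℕ) (z : ℕ → ℝ) : Prop :=
  ∃ lam : ℝ, ∀ k, 1 ≤ k → k ≤ n →
    (-1 : ℝ) ^ (k + 1) * z k / Real.sqrt (1 - z k ^ 2) + 4 * γ * pot n z (z k) = lam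

lemma pattern_eq_prod (n : ℕ) (z : ℕ → ℝ) (t : ℝ) :
    pattern n z t = -∏ i ∈ Finset.Icc 1 n, (if z i ≤ t then (-1 : ℝ) else 1) := by
  simp [pattern, pow_succ, Finset.prod_ite]

lemma abs_pattern (n : ℕ) (z : ℕ → ℝ) (t : ℝ) : |pattern n z t| = 1 := by
  simp [pattern, abs_pow]

lemma measurable_pattern (n : ℕ) (z : ℕ → ℝ) : Measurable (pattern n z) := by
  have h : pattern n z =
      fun t => -∏ i ∈ Finset.Icc 1 n, (if z i ≤ t then (-1 : ℝ) else 1) :=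
    funext (pattern_eq_prod n z)
  rw [h]
  refine Measurable.neg (Finset.measurable_prod _ fun i _ => ?_)
  exact Measurable.ite measurableSet_Ici measurable_const measurable_const

lemma intervalIntegrable_pattern (n : ℕ) (z : ℕ → ℝ) (a b : ℝ) :
    IntervalIntegrable (pattern n z) MeasureTheory.volume a b := by
  refine (intervalIntegrable_const (c := (1 : ℝ))).mono_fun
    (measurable_pattern n z).aestronglyMeasurable ?_
  exact Filter.Eventually.of_forall fun t => by simp [abs_pattern]

lemma continuous_xi (n : ℕ) (z : ℕ → ℝ) : Continuous (xi n z) :=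
  intervalIntegral.continuous_primitive
    (fun a b => (intervalIntegrable_pattern n z a b).sub intervalIntegrable_const) _

/-- At zero mass, `ξ` is the integral of a function of modulus one from either pole. -/
lemma abs_xi_le {n : ℕ} {z : ℕ → ℝ} (hm : mass n z = 0) {s : ℝ} (h1 : -1 < s) (h2 : s < 1) :
    |xi n z s| ≤ 1 - |s| := by
  have hxi : xi n z s = ∫ t in (-1 : ℝ)..s, pattern n z t := by simp [xi, hm]
  have hleft : ‖∫ t in (-1 : ℝ)..s, pattern n z t‖ ≤ 1 * |s - (-1)| :=
    intervalIntegral.norm_integral_le_of_norm_le_const fun t _ => (abs_pattern n z t).le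
  have hright : ‖∫ t in s..1, pattern n z t‖ ≤ 1 * |1 - s| :=
    intervalIntegral.norm_integral_le_of_norm_le_const fun t _ => (abs_pattern n z t).le
  have hadd := intervalIntegral.integral_add_adjacent_intervals
    (intervalIntegrable_pattern n z (-1) s) (intervalIntegrable_pattern n z s 1)
  have htotal : ∫ t in (-1 : ℝ)..1, pattern n z t = 0 := by
    unfold mass at hm
    linarith
  rw [Real.norm_eq_abs, abs_of_pos (by linarith : 0 < s - -1)] at hleft
  rw [Real.norm_eq_abs, abs_of_pos (by linarith : 0 < 1 - s)] at hright
  rw [hxi]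
  rw [abs_le] at *
  rcases abs_cases s with ⟨h, _⟩ | ⟨h, _⟩ <;> rw [h] <;> constructor <;> linarith

lemma abs_xi_div_le_one {n : ℕ} {z : ℕ → ℝ} (hm : mass n z = 0) {s : ℝ}
    (h1 : -1 < s) (h2 : s < 1) : |xi n z s / (1 - s ^ 2)| ≤ 1 := by
  have hpos : 0 < 1 - s ^ 2 := by nlinarith
  rw [abs_div, abs_of_pos hpos, div_le_one hpos]
  have habs : |s| < 1 := abs_lt.2 ⟨h1, h2⟩
  have := abs_xi_le hm h1 h2
  nlinarith [sq_abs s, abs_nonneg s]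

lemma intervalIntegrable_xi_div (n : ℕ) (z : ℕ → ℝ) {a b : ℝ}
    (ha : a ∈ Set.Ioo (-1 : ℝ) 1) (hb : b ∈ Set.Ioo (-1 : ℝ) 1) :
    IntervalIntegrable (fun s => xi n z s / (1 - s ^ 2)) MeasureTheory.volume a b := by
  refine ContinuousOn.intervalIntegrable ?_
  refine (continuous_xi n z).continuousOn.div (by fun_prop) fun s hs => ?_
  obtain ⟨h1, h2⟩ := Set.OrdConnected.uIcc_subset Set.ordConnected_Ioo ha hb hs
  nlinarith

/-- At zero mass, the potential is 1-Lipschitz. -/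
lemma abs_pot_sub_le {n : ℕ} {z : ℕ → ℝ} (hm : mass n z = 0) {a b : ℝ}
    (ha : -1 < a) (hab : a < b) (hb : b < 1) : |pot n z b - pot n z a| ≤ b - a := by
  have h0 : (0 : ℝ) ∈ Set.Ioo (-1 : ℝ) 1 := by norm_num
  have hsub : pot n z b - pot n z a = ∫ s in a..b, xi n z s / (1 - s ^ 2) :=
    intervalIntegral.integral_interval_sub_left
      (intervalIntegrable_xi_div n z h0 ⟨by linarith, hb⟩)
      (intervalIntegrable_xi_div n z h0 ⟨ha, by linarith⟩)
  have hbound : ‖∫ s in a..b, xi n z s / (1 - s ^ 2)‖ ≤ 1 * |b - a| := by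
    refine intervalIntegral.norm_integral_le_of_norm_le_const fun s hs => ?_
    rw [Set.uIoc_of_le hab.le] at hs
    exact abs_xi_div_le_one hm (by linarith [hs.1]) (by linarith [hs.2])
  rw [hsub]
  rwa [Real.norm_eq_abs, one_mul, abs_of_pos (sub_pos.2 hab)] at hbound

lemma le_div_sqrt {x : ℝ} (h0 : 0 ≤ x) (h1 : x < 1) : x ≤ x / √(1 - x ^ 2) := by
  have hpos : 0 < √(1 - x ^ 2) := Real.sqrt_pos.2 (by nlinarith)
  have hle : √(1 - x ^ 2) ≤ 1 := Real.sqrt_le_one.2 (by nlinarith)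
  rw [le_div_iff₀ hpos]
  nlinarith

lemma div_sqrt_le {x : ℝ} (h0 : x ≤ 0) (h1 : -1 < x) : x / √(1 - x ^ 2) ≤ x := by
  have := le_div_sqrt (x := -x) (by linarith) (by linarith)
  rw [neg_sq, neg_div] at this
  linarith

/-- Remark: lower bound on the interfacial distance.  For every
`γ > 0` there is a constant `C > 0`, independent of the configuration, such that every
axisymmetric critical point of `E_γ` with mass `m = 0` satisfies
`z_{k+1} − z_k ≥ C·max{|z_k|, |z_{k+1}|}/γ` for all consecutive interfaces. -/
theorem interface_distance_lower_bound (γ : ℝ) (hγ : 0 < γ) :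
    ∃ C > (0 : ℝ), ∀ n : ℕ, 1 ≤ n → ∀ z : ℕ → ℝ,
      IsConfig n z → mass n z = 0 → IsCritical γ n z →
      ∀ k, 1 ≤ k → k ≤ n - 1 →
        C * max |z k| |z (k + 1)| / γ ≤ z (k + 1) - z k := by
  refine ⟨min γ (1 / 4), lt_min hγ (by norm_num), ?_⟩
  rintro n hn z ⟨hz0, hz1, hz⟩ hm ⟨lam, hlam⟩ k hk1 hk2
  have ha : -1 < z k := hz0 ▸ hz 0 k (by omega) (by omega)
  have hab : z k < z (k + 1) := hz k (k + 1) (by omega) (by omega)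
  have hb : z (k + 1) < 1 := hz1 ▸ hz (k + 1) (n + 1) (by omega) (by omega)
  have hpot := abs_pot_sub_le hm ha hab hb
  have ea := hlam k hk1 (by omega)
  have eb := hlam (k + 1) (by omega) (by omega)
  generalize z k = a at *
  generalize z (k + 1) = b at *
  -- Opposite curvature signs turn the difference of the two equations into a sum of curvatures.
  have hcurv : |a / √(1 - a ^ 2) + b / √(1 - b ^ 2)| ≤ 4 * γ * (b - a) := by
    have heq : (-1 : ℝ) ^ (k + 1) * (a / √(1 - a ^ 2) + b / √(1 - b ^ 2))
        = 4 * γ * (pot n z b - pot n z a) := by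
      rw [pow_succ (-1 : ℝ) (k + 1)] at eb
      simp only [mul_div_assoc] at ea eb
      linarith
    have habs := congrArg abs heq
    rw [abs_mul, abs_mul, abs_pow, abs_neg, abs_one, one_pow, one_mul,
      abs_of_pos (by positivity : 0 < 4 * γ)] at habs
    rw [habs]
    exact mul_le_mul_of_nonneg_left hpot (by positivity)
  rw [div_le_iff₀ hγ]
  have hCγ : min γ (1 / 4) ≤ γ := min_le_left _ _
  have hC4 : min γ (1 / 4) ≤ 1 / 4 := min_le_right _ _
  have hM : 0 ≤ max |a| |b| := (abs_nonneg a).trans (le_max_left _ _)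
  have hcurv' := abs_le.1 hcurv
  have same_sign (h : max |a| |b| ≤ 4 * γ * (b - a)) :
      min γ (1 / 4) * max |a| |b| ≤ (b - a) * γ := by nlinarith
  rcases le_total 0 a with h0a | ha0
  · refine same_sign (max_le ?_ ?_)
    · rw [abs_of_nonneg h0a]
      linarith [le_div_sqrt h0a (by linarith), le_div_sqrt (h0a.trans hab.le) hb]
    · rw [abs_of_nonneg (h0a.trans hab.le)]
      linarith [le_div_sqrt h0a (by linarith), le_div_sqrt (h0a.trans hab.le) hb]
  · rcases le_total b 0 with hb0 | h0b
    · refine same_sign (max_le ?_ ?_)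
      · rw [abs_of_nonpos ha0]
        linarith [div_sqrt_le ha0 ha, div_sqrt_le hb0 (by linarith)]
      · rw [abs_of_nonpos hb0]
        linarith [div_sqrt_le ha0 ha, div_sqrt_le hb0 (by linarith)]
    · have hmax : max |a| |b| ≤ b - a := by
        rw [abs_of_nonpos ha0, abs_of_nonneg h0b]
        exact max_le (by linarith) (by linarith)
      nlinarith
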